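/- For each κ ∈ (0,1/2) there is a constant C < ∞ such that for all bounded continuous S₁, S₂: ℝ → ℝ with ‖S₁‖_{C^{1/2−κ/2}} < ∞ and ‖S₂‖_{C^{1/2−κ/2}} < ∞, every bounded continuous v: ℝ → ℝ with ‖v‖_{C^{1/2+κ}} < ∞, and every x ∈ ℝ, one has ∫_ℝ |e^{S₁(y)−S₁(x)} − e^{S₂(y)−S₂(x)}| · |v(y) − v(x)| / (y−x)² dy ≤ C ‖v‖_{C^{1/2+κ}} ‖S₁ − S₂‖_{C^{1/2−κ/2}} exp(2 sup|S₁| + 2 sup|S₂|). -/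

import Mathlib

open MeasureTheory

/-- The set whose supremum is the Hölder seminorm of `g` with exponent `γ`:
values `|g(x) - g(y)| / |x-y|^γ` over `x ≠ y` with `|x-y| ≤ 1`. -/
noncomputable def holderSet (γ : ℝ) (g : ℝ → ℝ) : Set ℝ :=
  {r | ∃ x y : ℝ, x ≠ y ∧ |x - y| ≤ 1 ∧ r = |g x - g y| / |x - y| ^ γ}

/-- The Hölder norm `‖g‖_{C^γ} = sup |g| + sup_{0<|x-y|≤1} |g(x)-g(y)|/|x-y|^γ`. -/
noncomputable def holderNorm (γ : ℝ) (g : ℝ → ℝ) : ℝ :=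
  sSup (Set.range fun x => |g x|) + sSup (holderSet γ g)

/-- Finiteness of the Hölder norm `‖g‖_{C^γ}`: `g` is bounded and its Hölder
seminorm quotient set is bounded above. -/
def HolderFinite (γ : ℝ) (g : ℝ → ℝ) : Prop :=
  BddAbove (Set.range fun x => |g x|) ∧ BddAbove (holderSet γ g)

noncomputable def kerAux (κ : ℝ) (r : ℝ) : ℝ :=
  if r ≤ 1 then r ^ (κ / 2 - 1) else 4 * r ^ (-2 : ℝ)

theorem kerAux_nonneg (κ : ℝ) {r : ℝ} (hr : 0 ≤ r) : 0 ≤ kerAux κ r := by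
  unfold kerAux; split_ifs <;> positivity

theorem kerAux_integrableOn (κ : ℝ) (h0 : 0 < κ) :
    IntegrableOn (fun r : ℝ => kerAux κ r) (Set.Ioi 0) := by
  rw [← Set.Ioc_union_Ioi_eq_Ioi (zero_le_one : (0:ℝ) ≤ 1)]
  refine IntegrableOn.union ?_ ?_
  · have h : IntervalIntegrable (fun r : ℝ => r ^ (κ / 2 - 1)) volume 0 1 :=
      intervalIntegral.intervalIntegrable_rpow' (by linarith)
    rw [intervalIntegrable_iff_integrableOn_Ioc_of_le zero_le_one] at h
    refine h.congr_fun (fun r hr => ?_) measurableSet_Ioc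
    simp [kerAux, hr.2]
  · have h : IntegrableOn (fun r : ℝ => 4 * r ^ (-2 : ℝ)) (Set.Ioi 1) :=
      (integrableOn_Ioi_rpow_of_lt (by norm_num) one_pos).const_mul 4
    refine h.congr_fun (fun r hr => ?_) measurableSet_Ioi
    simp [kerAux, not_le.2 (Set.mem_Ioi.1 hr)]

theorem kerAux_integrable (κ : ℝ) (h0 : 0 < κ) : Integrable (fun t : ℝ => kerAux κ |t|) := by
  have hpos : IntegrableOn (fun r : ℝ => kerAux κ r) (Set.Ioi 0) := kerAux_integrableOn κ h0
  have h1 : IntegrableOn (fun t : ℝ => kerAux κ |t|) (Set.Ioi 0) :=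
    hpos.congr_fun (fun r hr => by simp only [abs_of_pos (Set.mem_Ioi.1 hr)]) measurableSet_Ioi
  have h2 : IntegrableOn (fun t : ℝ => kerAux κ |t|) (Set.Iio 0) := by
    rw [← integrable_indicator_iff measurableSet_Ioi] at h1
    rw [← integrable_indicator_iff measurableSet_Iio]
    refine h1.comp_neg.congr (Filter.Eventually.of_forall fun t => ?_)
    simp [Set.indicator]
  rw [← integrableOn_univ, ← Set.Iic_union_Ioi (a := (0 : ℝ))]
  exact ((integrableOn_Iic_iff_integrableOn_Iio).2 h2).union h1

theorem holderSet_nonneg (γ : ℝ) (g : ℝ → ℝ) : 0 ≤ sSup (holderSet γ g) := by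
  apply Real.sSup_nonneg
  rintro r ⟨x, y, -, -, rfl⟩
  positivity

theorem supAbs_nonneg (g : ℝ → ℝ) : 0 ≤ sSup (Set.range fun x => |g x|) := by
  apply Real.sSup_nonneg
  rintro r ⟨x, rfl⟩
  positivity

theorem holderNorm_nonneg (γ : ℝ) (g : ℝ → ℝ) : 0 ≤ holderNorm γ g :=
  add_nonneg (supAbs_nonneg g) (holderSet_nonneg γ g)

theorem holder_far {γ : ℝ} {g : ℝ → ℝ} (h : HolderFinite γ g) (x y : ℝ) :
    |g y - g x| ≤ 2 * holderNorm γ g := by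
  have h1 := le_csSup h.1 ⟨x, rfl⟩
  have h2 := le_csSup h.1 ⟨y, rfl⟩
  have h3 := holderSet_nonneg γ g
  have h4 := abs_sub (g y) (g x)
  simp only at h1 h2
  unfold holderNorm
  linarith

theorem holder_near {γ : ℝ} {g : ℝ → ℝ} (h : HolderFinite γ g) {x y : ℝ} (hne : y ≠ x)
    (hxy : |y - x| ≤ 1) : |g y - g x| ≤ holderNorm γ g * |y - x| ^ γ := by
  have h1 := le_csSup h.2 ⟨y, x, hne, hxy, rfl⟩
  have hp : 0 < |y - x| := abs_pos.2 (sub_ne_zero.2 hne)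
  rw [div_le_iff₀ (by positivity)] at h1
  refine h1.trans (mul_le_mul_of_nonneg_right ?_ (by positivity))
  have := supAbs_nonneg g
  unfold holderNorm
  linarith

theorem holderFinite_sub {γ : ℝ} {f g : ℝ → ℝ} (hf : HolderFinite γ f) (hg : HolderFinite γ g) :
    HolderFinite γ (fun z => f z - g z) := by
  obtain ⟨⟨a, ha⟩, ⟨b, hb⟩⟩ := hf
  obtain ⟨⟨c, hc⟩, ⟨d, hd⟩⟩ := hg
  refine ⟨⟨a + c, ?_⟩, ⟨b + d, ?_⟩⟩
  · rintro _ ⟨x, rfl⟩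
    have h1 := ha ⟨x, rfl⟩
    have h2 := hc ⟨x, rfl⟩
    have h4 := abs_sub (f x) (g x)
    simp only at h1 h2 ⊢
    linarith
  · rintro _ ⟨x, y, hne, hxy, rfl⟩
    have h1 := hb ⟨x, y, hne, hxy, rfl⟩
    have h2 := hd ⟨x, y, hne, hxy, rfl⟩
    refine le_trans ?_ (add_le_add h1 h2)
    rw [← add_div]
    refine div_le_div_of_nonneg_right ?_ (by positivity)
    have h4 := abs_sub (f x - f y) (g x - g y)
    rwa [show f x - g x - (f y - g y) = f x - f y - (g x - g y) by ring]

theorem exp_sub_le_aux {a b M : ℝ} (ha : a ≤ M) (hb : b ≤ M) :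
    |Real.exp a - Real.exp b| ≤ Real.exp M * |a - b| := by
  wlog hab : b ≤ a generalizing a b
  · rw [abs_sub_comm, abs_sub_comm a]
    exact this hb ha (le_of_not_ge hab)
  rw [abs_of_nonneg (sub_nonneg.2 (Real.exp_le_exp.2 hab)), abs_of_nonneg (sub_nonneg.2 hab)]
  have h1 := Real.add_one_le_exp (b - a)
  have h2 : Real.exp b = Real.exp a * Real.exp (b - a) := by rw [← Real.exp_add]; ring_nf
  have h3 := Real.exp_le_exp.2 ha
  have h4 := Real.exp_pos a
  calc Real.exp a - Real.exp b ≤ Real.exp a * (a - b) := by rw [h2]; nlinarith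
    _ ≤ _ := mul_le_mul_of_nonneg_right h3 (by linarith)

/-- For `κ ∈ (0,1/2)` there is `C < ∞` such that for all bounded continuous `S₁, S₂`
with finite `C^(1/2-κ/2)` norms, every bounded continuous `v` with
`‖v‖_{C^(1/2+κ)} < ∞`, and every `x`,
`∫ |e^(S₁(y)-S₁(x)) - e^(S₂(y)-S₂(x))| |v(y)-v(x)| / (y-x)² dy
  ≤ C ‖v‖_{C^(1/2+κ)} ‖S₁-S₂‖_{C^(1/2-κ/2)} exp(2 sup|S₁| + 2 sup|S₂|)`. -/
theorem Xi_operator_stability (κ : ℝ) (hκ : κ ∈ Set.Ioo (0 : ℝ) (1 / 2)) :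
    ∃ C : ℝ, ∀ S₁ S₂ v : ℝ → ℝ, Continuous S₁ → Continuous S₂ →
      HolderFinite (1 / 2 - κ / 2) S₁ → HolderFinite (1 / 2 - κ / 2) S₂ →
      Continuous v → HolderFinite (1 / 2 + κ) v →
      ∀ x : ℝ,
        ∫⁻ y : ℝ, ENNReal.ofReal
            (|Real.exp (S₁ y - S₁ x) - Real.exp (S₂ y - S₂ x)| * |v y - v x| /
              (y - x) ^ 2)
          ≤ ENNReal.ofReal
              (C * holderNorm (1 / 2 + κ) v *
                holderNorm (1 / 2 - κ / 2) (fun z => S₁ z - S₂ z) *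
                Real.exp (2 * sSup (Set.range fun z => |S₁ z|) +
                  2 * sSup (Set.range fun z => |S₂ z|))) := by
  obtain ⟨h0, -⟩ := hκ
  refine ⟨∫ t : ℝ, kerAux κ |t|, ?_⟩
  intro S₁ S₂ v _ _ hS₁ hS₂ _ hv x
  have hD := holderFinite_sub hS₁ hS₂
  set D : ℝ → ℝ := fun z => S₁ z - S₂ z with hDdef
  set M : ℝ := 2 * sSup (Set.range fun z => |S₁ z|) + 2 * sSup (Set.range fun z => |S₂ z|)
    with hM
  have hNv := holderNorm_nonneg (1 / 2 + κ) v
  have hND := holderNorm_nonneg (1 / 2 - κ / 2) D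
  set V := holderNorm (1 / 2 + κ) v
  set N := holderNorm (1 / 2 - κ / 2) D
  have key : ∀ y : ℝ, |Real.exp (S₁ y - S₁ x) - Real.exp (S₂ y - S₂ x)| * |v y - v x| /
      (y - x) ^ 2 ≤ (V * N * Real.exp M) * kerAux κ |y - x| := by
    intro y
    by_cases hne : y = x
    · subst hne
      simp only [sub_self, abs_zero, mul_zero, zero_div]
      exact mul_nonneg (by positivity) (kerAux_nonneg κ le_rfl)
    have hp : 0 < |y - x| := abs_pos.2 (sub_ne_zero.2 hne)
    have hexp : |Real.exp (S₁ y - S₁ x) - Real.exp (S₂ y - S₂ x)| ≤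
        Real.exp M * |D y - D x| := by
      have a1 := le_csSup hS₁.1 ⟨x, rfl⟩
      have a2 := le_csSup hS₁.1 ⟨y, rfl⟩
      have b1 := le_csSup hS₂.1 ⟨x, rfl⟩
      have b2 := le_csSup hS₂.1 ⟨y, rfl⟩
      simp only at a1 a2 b1 b2
      have n1 := supAbs_nonneg S₁
      have n2 := supAbs_nonneg S₂
      have e1 := neg_abs_le (S₁ x)
      have e2 := le_abs_self (S₁ y)
      have e3 := neg_abs_le (S₂ x)
      have e4 := le_abs_self (S₂ y)
      have := exp_sub_le_aux (a := S₁ y - S₁ x) (b := S₂ y - S₂ x) (M := M)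
        (by linarith) (by linarith)
      rwa [show D y - D x = S₁ y - S₁ x - (S₂ y - S₂ x) by simp only [hDdef]; ring]
    have hsq : (y - x) ^ 2 = |y - x| ^ (2 : ℝ) := by
      rw [Real.rpow_two, sq_abs]
    rw [hsq, div_le_iff₀ (by positivity)]
    unfold kerAux
    split_ifs with hle
    · have hv1 := holder_near hv hne hle
      have hD1 := holder_near hD hne hle
      calc _ ≤ (Real.exp M * (N * |y - x| ^ (1 / 2 - κ / 2))) * (V * |y - x| ^ (1 / 2 + κ)) :=
            mul_le_mul (hexp.trans (by gcongr)) hv1 (by positivity) (by positivity)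
        _ = V * N * Real.exp M * (|y - x| ^ (1 / 2 - κ / 2) * |y - x| ^ (1 / 2 + κ)) := by ring
        _ = V * N * Real.exp M * (|y - x| ^ (κ / 2 - 1) * |y - x| ^ (2 : ℝ)) := by
            rw [← Real.rpow_add hp, ← Real.rpow_add hp]; ring_nf
        _ = _ := by ring
    · have hv1 := holder_far hv x y
      have hD1 := holder_far hD x y
      calc _ ≤ (Real.exp M * (2 * N)) * (2 * V) :=
            mul_le_mul (hexp.trans (by gcongr)) hv1 (by positivity) (by positivity)
        _ = V * N * Real.exp M * 4 * 1 := by ring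
        _ = V * N * Real.exp M * 4 * (|y - x| ^ (-2 : ℝ) * |y - x| ^ (2 : ℝ)) := by
            rw [← Real.rpow_add hp]; norm_num
        _ = _ := by ring
  calc _ ≤ ∫⁻ y : ℝ, ENNReal.ofReal ((V * N * Real.exp M) * kerAux κ |y - x|) :=
        lintegral_mono fun y => ENNReal.ofReal_le_ofReal (key y)
    _ = ∫⁻ y : ℝ, ENNReal.ofReal ((V * N * Real.exp M) * kerAux κ |y|) :=
        lintegral_sub_right_eq_self
          (fun y : ℝ => ENNReal.ofReal ((V * N * Real.exp M) * kerAux κ |y|)) x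
    _ = ENNReal.ofReal (∫ y : ℝ, (V * N * Real.exp M) * kerAux κ |y|) := by
        rw [ofReal_integral_eq_lintegral_ofReal ((kerAux_integrable κ h0).const_mul _)]
        exact Filter.Eventually.of_forall fun y =>
          mul_nonneg (by positivity) (kerAux_nonneg κ (abs_nonneg y))
    _ = _ := by
        rw [integral_const_mul]
        congr 1
        ring
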